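/- arXiv:gr-qc/9909053 — 2 statements merged into one kernel-verified Lean document; each statement's English description precedes it below -/
import Mathlib

section
/- Define c : ℕ × ℕ → ℕ by c(0,0) = 1, c(0,p) = 0 for p ≥ 1, and for n ≥ 1, c(n,p) = c(n−1, p−1) + c(n−1, p+1), where the term c(n−1, −1) is taken to be 0 (so c(n,0) = c(n−1,1)). Then for all n, p ∈ ℕ: c(n,p) = (p+1)·n! / ( ((n−p)/2)! · ((n+p)/2 + 1)! ) whenever p ≤ n and n − p is even, and c(n,p) = 0 otherwise. -/
/-- The multiplicities `c n p` of the `(p+1)`-dimensional irreducible representation of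
SU(2) in the `n`-fold tensor power of the fundamental representation, defined by the
recursion `c 0 0 = 1`, `c 0 (p+1) = 0`, `c (n+1) 0 = c n 1`,
`c (n+1) (p+1) = c n p + c n (p+2)`. -/
def cMult : ℕ → ℕ → ℕ
  | 0, 0 => 1
  | 0, _ + 1 => 0
  | n + 1, 0 => cMult n 1
  | n + 1, p + 1 => cMult n p + cMult n (p + 2)

/-!
In `V^{⊗n}`, with `V` the fundamental representation of SU(2), the irreducible representation of
highest weight `p` occurs as often as the weight space of `p` is larger than that of `p + 2`.
Weights of `V^{⊗n}` are sums of `n` signs, so these dimensions are binomial coefficients, and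
`cMult (p + 2 * k) p = choose (p + 2 * k) (p + k) - choose (p + 2 * k) (p + k + 1)`.
At `p = 0` the recursion for `cMult` matches that of the difference because the weights are
symmetric under negation: this is the reflection principle for walks on a half-line.
-/

/-- The dimension of the weight `q` space of the `n`-fold tensor power of the fundamental
representation of SU(2), i.e. the number of walks on `ℤ` from `0` to `q` with `n` steps `±1`. -/
def weightMult : ℕ → ℤ → ℕ
  | 0, q => if q = 0 then 1 else 0
  | n + 1, q => weightMult n (q - 1) + weightMult n (q + 1)

theorem weightMult_neg (n : ℕ) (q : ℤ) : weightMult n (-q) = weightMult n q := by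
  induction n generalizing q with
  | zero => simp [weightMult]
  | succ n ih =>
    rw [weightMult, weightMult, ← ih (q - 1), ← ih (q + 1), add_comm, neg_sub', neg_add']
    simp only [sub_neg_eq_add]

theorem weightMult_eq_zero {n : ℕ} {q : ℤ} (h : ∀ k ≤ n, q ≠ 2 * k - n) :
    weightMult n q = 0 := by
  induction n generalizing q with
  | zero => simpa [weightMult] using h 0 le_rfl
  | succ n ih =>
    have down : weightMult n (q - 1) = 0 := ih fun k hk ↦ by
      have := h (k + 1) (by omega)
      omega
    have up : weightMult n (q + 1) = 0 := ih fun k hk ↦ by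
      have := h k (by omega)
      omega
    rw [weightMult, down, up]

theorem weightMult_succ_add_one (n : ℕ) (q : ℤ) :
    weightMult (n + 1) (q + 1) = weightMult n q + weightMult n (q + 2) := by
  rw [weightMult, add_sub_cancel_right, add_assoc, one_add_one_eq_two]

theorem weightMult_two_mul_sub (n k : ℕ) : weightMult n (2 * k - n) = n.choose k := by
  induction n generalizing k with
  | zero =>
    cases k with
    | zero => rfl
    | succ k => exact weightMult_eq_zero fun j hj ↦ by omega
  | succ n ih =>
    cases k with
    | zero =>
      have below : weightMult n (-n - 2) = 0 := weightMult_eq_zero fun j _ ↦ by omega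
      have lowest : weightMult n (-n) = 1 := by simpa using ih 0
      calc
        weightMult (n + 1) (2 * (0 : ℕ) - (n + 1 : ℕ))
        _ = weightMult (n + 1) (-n - 2 + 1) := by congr 1; push_cast; ring
        _ = weightMult n (-n - 2) + weightMult n (-n) := by
          rw [weightMult_succ_add_one, sub_add_cancel]
        _ = (n + 1).choose 0 := by rw [below, lowest, Nat.choose_zero_right]
    | succ k =>
      calc
        weightMult (n + 1) (2 * (k + 1 : ℕ) - (n + 1 : ℕ))
        _ = weightMult (n + 1) (2 * k - n + 1) := by congr 1; push_cast; ring
        _ = weightMult n (2 * k - n) + weightMult n (2 * (k + 1 : ℕ) - n) := by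
          rw [weightMult_succ_add_one]; congr 2; push_cast; ring
        _ = (n + 1).choose (k + 1) := by rw [ih, ih, Nat.choose_succ_succ]

theorem cMult_add_weightMult (n p : ℕ) :
    cMult n p + weightMult n (p + 2) = weightMult n p := by
  induction n generalizing p with
  | zero =>
    have above : weightMult 0 (p + 2) = 0 := weightMult_eq_zero fun k _ ↦ by omega
    rw [above, add_zero]
    cases p with
    | zero => rfl
    | succ p => exact (weightMult_eq_zero fun k _ ↦ by omega).symm
  | succ n ih =>
    cases p with
    | zero =>
      have reflection : weightMult n (-1) = weightMult n 1 := weightMult_neg n 1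
      calc
        cMult (n + 1) 0 + weightMult (n + 1) ((0 : ℕ) + 2)
        _ = cMult n 1 + (weightMult n 1 + weightMult n (1 + 2)) := by
          rw [← weightMult_succ_add_one]; rfl
        _ = weightMult n (-1) + weightMult n 1 := by
          rw [add_left_comm, reflection]; exact congrArg _ (ih 1)
        _ = weightMult (n + 1) (0 : ℕ) := rfl
    | succ p =>
      calc
        cMult (n + 1) (p + 1) + weightMult (n + 1) ((p + 1 : ℕ) + 2)
        _ = (cMult n p + cMult n (p + 2)) +
            (weightMult n (p + 2) + weightMult n (p + 2 + 2)) := by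
          rw [← weightMult_succ_add_one, cMult, Nat.cast_succ, add_right_comm (p : ℤ)]
        _ = (cMult n p + weightMult n (p + 2)) +
            (cMult n (p + 2) + weightMult n ((p + 2 : ℕ) + 2)) := add_add_add_comm ..
        _ = weightMult n p + weightMult n (p + 2) := by rw [ih, ih]; rfl
        _ = weightMult (n + 1) (p + 1 : ℕ) := (weightMult_succ_add_one n p).symm

theorem cMult_add_choose (p k : ℕ) :
    cMult (p + 2 * k) p + (p + 2 * k).choose (p + k + 1) = (p + 2 * k).choose (p + k) := by
  rw [← weightMult_two_mul_sub, ← weightMult_two_mul_sub]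
  convert cMult_add_weightMult (p + 2 * k) p using 3 <;> push_cast <;> ring

theorem cMult_mul_succ (p k : ℕ) :
    cMult (p + 2 * k) p * (p + k + 1) = (p + 1) * (p + 2 * k).choose (p + k) := by
  have ballot := cMult_add_choose p k
  have ratio := Nat.choose_succ_right_eq (p + 2 * k) (p + k)
  rw [show p + 2 * k - (p + k) = k by omega] at ratio
  linear_combination (p + k + 1) * ballot - ratio

theorem cMult_mul_factorial_mul_factorial (p k : ℕ) :
    cMult (p + 2 * k) p * (k.factorial * (p + k + 1).factorial) =
      (p + 1) * (p + 2 * k).factorial := by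
  have choose_mul := Nat.add_choose_mul_factorial_mul_factorial k (p + k)
  rw [show k + (p + k) = p + 2 * k by ring] at choose_mul
  calc
    cMult (p + 2 * k) p * (k.factorial * (p + k + 1).factorial)
    _ = cMult (p + 2 * k) p * (p + k + 1) * (k.factorial * (p + k).factorial) := by
      rw [Nat.factorial_succ]; ring
    _ = (p + 1) * ((p + 2 * k).choose (p + k) * k.factorial * (p + k).factorial) := by
      rw [cMult_mul_succ]; ring
    _ = (p + 1) * (p + 2 * k).factorial := by rw [choose_mul]

theorem cMult_eq_zero {n p : ℕ} (h : ¬(p ≤ n ∧ Even (n - p))) : cMult n p = 0 := by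
  have weight_eq_zero : weightMult n p = 0 :=
    weightMult_eq_zero fun k hk hp ↦ h ⟨by omega, n - k, by omega⟩
  have := cMult_add_weightMult n p
  omega

/-- Closed form for the SU(2) tensor-power multiplicities:
`c n p = (p+1)·n! / (((n−p)/2)!·((n+p)/2 + 1)!)` when `p ≤ n` and `n − p` is even,
and `c n p = 0` otherwise. -/
theorem stmt_7 :
    ∀ n p : ℕ,
      (p ≤ n ∧ Even (n - p) →
        (cMult n p : ℚ) =
          (p + 1) * (n.factorial : ℚ) /
            ((((n - p) / 2).factorial : ℚ) * (((n + p) / 2 + 1).factorial : ℚ))) ∧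
      (¬(p ≤ n ∧ Even (n - p)) → cMult n p = 0) := by
  refine fun n p ↦ ⟨?_, cMult_eq_zero⟩
  rintro ⟨hp, k, hk⟩
  obtain rfl : n = p + 2 * k := by omega
  rw [show (p + 2 * k - p) / 2 = k by omega, show (p + 2 * k + p) / 2 = p + k by omega,
    eq_div_iff (by positivity)]
  exact_mod_cast cMult_mul_factorial_mul_factorial p k
end

section
/- For every λ ∈ ℝ and p ∈ ℕ set B_p(λ) = ∑_{k=0}^{∞} λ^{2k+p} / ( k! · (k+p)! ). Then ∑_{p=0}^{∞} ( B_p(λ) − B_{p+2}(λ) )² = B_0(2λ) − B_2(2λ), the left-hand series converging absolutely. (In Bessel-function notation: ∑_{p=0}^{∞} ( I_p(2λ) − I_{p+2}(2λ) )² = I_0(4λ) − I_2(4λ); this is the identity showing that the normalisation constant of the quasi-coherent weave coefficients s_p(λ) = N(λ)(I_p(2λ) − I_{p+2}(2λ)) is N(λ) = (I_0(4λ) − I_2(4λ))^{−1/2}, i.e. that ∑_p s_p(λ)² = 1.) -/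
/-- `besselB p lam = ∑ₖ lam^{2k+p}/(k!(k+p)!)`, i.e. `I_p(2·lam)` where `I_p` is the
modified Bessel function of the first kind of order `p`. -/
noncomputable def besselB (p : ℕ) (lam : ℝ) : ℝ :=
  ∑' k : ℕ, lam ^ (2 * k + p) / ((k.factorial : ℝ) * ((k + p).factorial : ℝ))

/-!
Write `B_r := B_{|r|}` for `r : ℤ`. In a Banach algebra, every unit `u` satisfies
`exp (λ (u + u⁻¹)) = ∑_{r ∈ ℤ} B_r(λ) u ^ r`. Take `u = e^{2πit}` in the continuous functions on the
circle, expand only the first factor of `exp (λ (u + u⁻¹)) exp (μ (u + u⁻¹))` and compare Fourier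
coefficients: this is Neumann's addition theorem `∑_p B_{p+m}(λ) B_{p+n}(μ) = B_{n-m}(λ+μ)`. It
evaluates the sum over `p : ℤ` of `(B_{p-1} - B_{p+1})(λ) (B_{p-1} - B_{p+1})(μ)` as
`2 (B_0 - B_2)(λ+μ)`. Both factors are odd in `p`, so the sum over `p ≥ 1` is half of that.
-/

open NormedSpace (exp expSeries)
open scoped Nat

theorem hasSum_besselB (p : ℕ) (lam : ℝ) :
    HasSum (fun k : ℕ ↦ lam ^ (2 * k + p) / ((k ! : ℝ) * ((k + p)! : ℝ))) (besselB p lam) := by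
  have hexp : Summable fun n : ℕ ↦ ‖lam ^ n / (n ! : ℝ)‖ :=
    (Real.summable_pow_div_factorial lam).norm
  have hinj : Function.Injective fun k : ℕ ↦ (k, k + p) := fun _ _ h ↦ congrArg Prod.fst h
  refine (((summable_mul_of_summable_norm hexp hexp).comp_injective hinj).congr fun k ↦ ?_).hasSum
  simp only [Function.comp_apply]
  ring

theorem hasSum_nat_succ_of_even {K : Type*} [DivisionRing K] [NeZero (2 : K)] [TopologicalSpace K]
    [IsTopologicalRing K] {f : ℤ → K} {a : K} (hf : HasSum f (2 * a)) (heven : f.Even)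
    (hzero : f 0 = 0) : HasSum (fun n : ℕ ↦ f (n + 1)) a := by
  have hfold := hf.nat_add_neg
  simp only [heven _, ← two_mul, hzero, add_zero] at hfold
  rw [hasSum_mul_left_iff two_ne_zero, ← hasSum_nat_add_iff' 1] at hfold
  simpa [hzero] using hfold

section GeneratingFunction

variable {A : Type*} [NormedRing A] [NormedAlgebra ℝ A]

/-- The generating function `exp (lam (u + u⁻¹))` of the modified Bessel functions, evaluated at a
unit `u` of a normed algebra. -/
noncomputable def besselGeneratingFunction (u : Aˣ) (lam : ℝ) : A :=
  exp (lam • ((u : A) + ↑u⁻¹))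

theorem exp_add_of_commute_of_real [CompleteSpace A] {x y : A} (hxy : Commute x y) :
    exp (x + y) = exp x * exp y := by
  have hball (z : A) : z ∈ Metric.eball 0 (expSeries ℝ A).radius := by
    simp [NormedSpace.expSeries_radius_eq_top]
  exact NormedSpace.exp_add_of_commute_of_mem_ball hxy (hball x) (hball y)

theorem besselGeneratingFunction_add [CompleteSpace A] (u : Aˣ) (lam mu : ℝ) :
    besselGeneratingFunction u (lam + mu) =
      besselGeneratingFunction u lam * besselGeneratingFunction u mu := by
  rw [besselGeneratingFunction, add_smul,
    exp_add_of_commute_of_real (((Commute.refl _).smul_left lam).smul_right mu)]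
  rfl

theorem exp_term_mul_exp_term_inv (u : Aˣ) (lam : ℝ) (m n : ℕ) :
    ((m ! : ℝ)⁻¹ • (lam • (u : A)) ^ m) * ((n ! : ℝ)⁻¹ • (lam • (↑u⁻¹ : A)) ^ n) =
      (lam ^ (m + n) / ((m ! : ℝ) * (n ! : ℝ))) • ((u ^ ((m : ℤ) - n) : Aˣ) : A) := by
  have hu : (u : A) ^ m * (↑u⁻¹ : A) ^ n = ((u ^ ((m : ℤ) - n) : Aˣ) : A) := by
    rw [zpow_sub, zpow_natCast, zpow_natCast, ← inv_pow]
    push_cast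
    rfl
  rw [← hu, smul_pow, smul_pow, smul_smul, smul_smul, smul_mul_smul_comm]
  congr 1
  field_simp
  ring

theorem hasSum_smul_zpow_sub_besselGeneratingFunction [CompleteSpace A] (u : Aˣ) (lam : ℝ) :
    HasSum (fun x : ℕ × ℕ ↦ (lam ^ (x.1 + x.2) / ((x.1 ! : ℝ) * (x.2 ! : ℝ))) •
      ((u ^ ((x.1 : ℤ) - x.2) : Aˣ) : A)) (besselGeneratingFunction u lam) := by
  have hcomm : Commute (lam • (u : A)) (lam • (↑u⁻¹ : A)) :=
    ((Commute.refl u).inv_right.units_val.smul_left lam).smul_right lam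
  have hsummable := summable_mul_of_summable_norm
    (NormedSpace.norm_expSeries_summable' (𝕂 := ℝ) (lam • (u : A)))
    (NormedSpace.norm_expSeries_summable' (𝕂 := ℝ) (lam • (↑u⁻¹ : A)))
  have hprod := (NormedSpace.exp_series_hasSum_exp' (𝕂 := ℝ) (lam • (u : A))).mul
    (NormedSpace.exp_series_hasSum_exp' (𝕂 := ℝ) (lam • (↑u⁻¹ : A))) hsummable
  rw [besselGeneratingFunction, smul_add, exp_add_of_commute_of_real hcomm]
  exact hprod.congr_fun fun x ↦ (exp_term_mul_exp_term_inv u lam x.1 x.2).symm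

/-- Pairs of naturals parametrised by their difference and their minimum: the inverse map is
`(m, n) ↦ (m - n, min m n)`. It collects the terms `u ^ m * u⁻¹ ^ n` of a double series by the
exponent `m - n`. -/
def differenceMinEquiv : ℤ × ℕ ≃ ℕ × ℕ where
  toFun x := (x.2 + x.1.toNat, x.2 + (-x.1).toNat)
  invFun y := ((y.1 : ℤ) - y.2, min y.1 y.2)
  left_inv := by rintro ⟨r, k⟩; ext <;> dsimp only <;> omega
  right_inv := by rintro ⟨m, n⟩; ext <;> dsimp only <;> omega

theorem hasSum_besselB_smul_zpow [CompleteSpace A] (u : Aˣ) (lam : ℝ) :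
    HasSum (fun r : ℤ ↦ besselB r.natAbs lam • ((u ^ r : Aˣ) : A))
      (besselGeneratingFunction u lam) := by
  refine (differenceMinEquiv.hasSum_iff.mpr
    (hasSum_smul_zpow_sub_besselGeneratingFunction u lam)).prod_fiberwise fun r ↦ ?_
  convert (hasSum_besselB r.natAbs lam).smul_const ((u ^ r : Aˣ) : A) using 2 with k
  have hsum : k + r.toNat + (k + (-r).toNat) = 2 * k + r.natAbs := by omega
  have hdiff : ((k + r.toNat : ℕ) : ℤ) - (k + (-r).toNat : ℕ) = r := by omega
  have hfactorial : ((k + r.toNat)! : ℝ) * ((k + (-r).toNat)! : ℝ) = k ! * (k + r.natAbs)! := by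
    obtain ⟨p, rfl | rfl⟩ := Int.eq_nat_or_neg r <;> simp [mul_comm]
  simp only [Function.comp_apply, differenceMinEquiv, Equiv.coe_fn_mk, hsum, hdiff, hfactorial]

end GeneratingFunction

section ConstantTerm

open AddCircle

/-- The function `t ↦ e^{2πit}` as a unit of the Banach algebra of continuous functions on the
circle; its integer powers are the Fourier monomials. -/
noncomputable def fourierUnit : C(UnitAddCircle, ℂ)ˣ where
  val := fourier 1
  inv := fourier (-1)
  val_inv := by ext t; rw [ContinuousMap.mul_apply, ← fourier_add]; simp
  inv_val := by ext t; rw [ContinuousMap.mul_apply, ← fourier_add]; simp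

theorem coe_fourierUnit_zpow (n : ℤ) :
    ((fourierUnit ^ n : C(UnitAddCircle, ℂ)ˣ) : C(UnitAddCircle, ℂ)) = fourier n := by
  induction n with
  | zero => ext; simp
  | succ n ih => rw [zpow_add_one, Units.val_mul, ih]; ext t; exact fourier_add.symm
  | pred n ih => rw [zpow_sub_one, Units.val_mul, ih]; ext t; exact fourier_add.symm

/-- The real part of the zeroth Fourier coefficient, as a continuous functional. The coefficient is
written as an `L²` inner product with the constant function `1`; it is real on the functions of
interest here, which are real series in the Fourier monomials. -/
noncomputable def constantTerm : C(UnitAddCircle, ℂ) →L[ℝ] ℝ :=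
  Complex.reCLM ∘L ((innerSL ℂ (fourierLp 2 0)) ∘L
    ContinuousMap.toLp 2 haarAddCircle ℂ).restrictScalars ℝ

theorem constantTerm_fourierUnit_zpow (n : ℤ) :
    constantTerm (fourierUnit ^ n : C(UnitAddCircle, ℂ)ˣ) = if n = 0 then 1 else 0 := by
  have horthonormal := orthonormal_iff_ite.mp (orthonormal_fourier (T := 1)) 0 n
  rw [coe_fourierUnit_zpow]
  change Complex.re (inner ℂ (fourierLp 2 0) (fourierLp 2 n)) = _
  rw [horthonormal]
  simp [eq_comm, apply_ite Complex.re]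

theorem constantTerm_zpow_mul_besselGeneratingFunction (n : ℤ) (lam : ℝ) :
    constantTerm (↑(fourierUnit ^ n) * besselGeneratingFunction fourierUnit lam) =
      besselB n.natAbs lam := by
  have hexpansion := ((hasSum_besselB_smul_zpow fourierUnit lam).mul_left
    (↑(fourierUnit ^ n) : C(UnitAddCircle, ℂ))).mapL constantTerm
  simp only [mul_smul_comm, ← Units.val_mul, ← zpow_add, map_smul,
    constantTerm_fourierUnit_zpow] at hexpansion
  refine hexpansion.unique ?_
  convert hasSum_single (-n) fun r hr ↦ ?_ using 1
  · simp
  · rw [if_neg (by omega), smul_zero]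

end ConstantTerm

theorem hasSum_besselB_mul_besselB (m n : ℤ) (lam mu : ℝ) :
    HasSum (fun p : ℤ ↦ besselB (p + m).natAbs lam * besselB (p + n).natAbs mu)
      (besselB (n - m).natAbs (lam + mu)) := by
  have hexpansion := (((hasSum_besselB_smul_zpow fourierUnit lam).mul_right
    (besselGeneratingFunction fourierUnit mu)).mul_left
      (↑(fourierUnit ^ (n - m)) : C(UnitAddCircle, ℂ))).mapL constantTerm
  rw [← besselGeneratingFunction_add, constantTerm_zpow_mul_besselGeneratingFunction,
    ← (Equiv.addRight m).hasSum_iff] at hexpansion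
  refine hexpansion.congr_fun fun p ↦ ?_
  have hexponent : n - m + (p + m) = p + n := by ring
  rw [Function.comp_apply, Equiv.coe_addRight, smul_mul_assoc, mul_smul_comm, map_smul, ← mul_assoc,
    ← Units.val_mul, ← zpow_add, hexponent, constantTerm_zpow_mul_besselGeneratingFunction,
    smul_eq_mul]

theorem hasSum_int_besselB_sub_mul_besselB_sub (q : ℤ) (lam mu : ℝ) :
    HasSum (fun p : ℤ ↦ (besselB (p - q).natAbs lam - besselB (p + q).natAbs lam) *
        (besselB (p - q).natAbs mu - besselB (p + q).natAbs mu))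
      (2 * (besselB 0 (lam + mu) - besselB (2 * q).natAbs (lam + mu))) := by
  have h (m n : ℤ) := hasSum_besselB_mul_besselB m n lam mu
  have hsum := ((h (-q) (-q)).sub (h (-q) q)).sub ((h q (-q)).sub (h q q))
  have hneg : -q - q = -(2 * q) := by ring
  have hpos : q - -q = 2 * q := by ring
  simp only [hneg, hpos, sub_self, Int.natAbs_neg, Int.natAbs_zero, ← sub_eq_add_neg] at hsum
  rw [← neg_sub (besselB 0 _), sub_neg_eq_add, ← two_mul] at hsum
  exact hsum.congr_fun fun p ↦ by ring

theorem odd_besselB_natAbs_sub (q : ℤ) (lam : ℝ) :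
    Function.Odd fun p : ℤ ↦ besselB (p - q).natAbs lam - besselB (p + q).natAbs lam := by
  intro p
  have hsub : (-p - q).natAbs = (p + q).natAbs := by omega
  have hadd : (-p + q).natAbs = (p - q).natAbs := by omega
  simp only [hsub, hadd, neg_sub]

theorem hasSum_besselB_sub_mul_besselB_sub (lam mu : ℝ) :
    HasSum (fun p : ℕ ↦
        (besselB p lam - besselB (p + 2) lam) * (besselB p mu - besselB (p + 2) mu))
      (besselB 0 (lam + mu) - besselB 2 (lam + mu)) := by
  have heven := (odd_besselB_natAbs_sub 1 lam).mul_odd (odd_besselB_natAbs_sub 1 mu)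
  have hhalf := hasSum_nat_succ_of_even (hasSum_int_besselB_sub_mul_besselB_sub 1 lam mu) heven
    (by simp)
  refine hhalf.congr_fun fun p ↦ ?_
  have hsub : ((p : ℤ) + 1 - 1).natAbs = p := by omega
  have hadd : ((p : ℤ) + 1 + 1).natAbs = p + 2 := by omega
  rw [hsub, hadd]

/-- Normalisation identity for the quasi-coherent weave coefficients:
`∑ₚ (I_p(2λ) − I_{p+2}(2λ))² = I_0(4λ) − I_2(4λ)`, the series converging absolutely. -/
theorem stmt_11 :
    ∀ lam : ℝ,
      Summable (fun p : ℕ => (besselB p lam - besselB (p + 2) lam) ^ 2) ∧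
      ∑' p : ℕ, (besselB p lam - besselB (p + 2) lam) ^ 2 =
        besselB 0 (2 * lam) - besselB 2 (2 * lam) := by
  intro lam
  have h := hasSum_besselB_sub_mul_besselB_sub lam lam
  simp only [← sq, ← two_mul] at h
  exact ⟨h.summable, h.tsum_eq⟩
end
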